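/- Let $K$ be an imaginary quadratic field of class number one with ring of integers $\mathcal{O}_K$, let $a \in \mathcal{O}_K$, let $\mathfrak{p}$ be a nonzero prime ideal of $\mathcal{O}_K$ not dividing $2$ (that is, $2 \notin \mathfrak{p}$), and let $r \ge 1$ be an integer such that the principal ideal $(a^2 - 64)$ equals $\mathfrak{p}^r$. Then $a - 8$ is a unit of $\mathcal{O}_K$ or $a + 8$ is a unit of $\mathcal{O}_K$. -/

import Mathlib

open NumberField

theorem eq_top_or_le_of_isMaximal_pow_le {R : Type*} [Semiring R] {𝔭 I : Ideal R}
    [𝔭.IsTwoSided] {r : ℕ} (h𝔭 : 𝔭.IsMaximal) (hI : 𝔭 ^ r ≤ I) : I = ⊤ ∨ I ≤ 𝔭 := by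
  refine or_iff_not_imp_right.2 fun hI𝔭 => ?_
  have hcoprime : 𝔭 ⊔ I = ⊤ := h𝔭.out.2 _ (left_lt_sup.2 hI𝔭)
  rw [← sup_eq_right.2 hI, Ideal.pow_sup_eq_top hcoprime]

theorem isUnit_or_mem_of_isMaximal_pow_le_span_singleton {R : Type*} [CommSemiring R]
    {𝔭 : Ideal R} {r : ℕ} {x : R} (h𝔭 : 𝔭.IsMaximal) (hx : 𝔭 ^ r ≤ Ideal.span {x}) :
    IsUnit x ∨ x ∈ 𝔭 := by
  simpa only [Ideal.span_singleton_eq_top, Ideal.span_singleton_le_iff_mem] using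
    eq_top_or_le_of_isMaximal_pow_le h𝔭 hx

section CommRing

variable {R : Type*} [CommRing R] {𝔭 : Ideal R} {r : ℕ}

theorem isUnit_or_isUnit_of_isMaximal_pow_le_span_mul {x y : R} (h𝔭 : 𝔭.IsMaximal)
    (hsub : y - x ∉ 𝔭) (hxy : 𝔭 ^ r ≤ Ideal.span {x * y}) : IsUnit x ∨ IsUnit y := by
  have hx : 𝔭 ^ r ≤ Ideal.span {x} :=
    hxy.trans (Ideal.span_singleton_le_span_singleton.2 (dvd_mul_right x y))
  have hy : 𝔭 ^ r ≤ Ideal.span {y} :=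
    hxy.trans (Ideal.span_singleton_le_span_singleton.2 (dvd_mul_left y x))
  rcases isUnit_or_mem_of_isMaximal_pow_le_span_singleton h𝔭 hx with hx_unit | hx_mem
  · exact .inl hx_unit
  · exact .inr <| (isUnit_or_mem_of_isMaximal_pow_le_span_singleton h𝔭 hy).resolve_right
      fun hy_mem => hsub (𝔭.sub_mem hy_mem hx_mem)

theorem factor_of_prime_power_is_unit_general {a : R} (h𝔭 : 𝔭.IsMaximal) (hodd : (2 : R) ∉ 𝔭)
    (ha : 𝔭 ^ r ≤ Ideal.span {a ^ 2 - 64}) : IsUnit (a - 8) ∨ IsUnit (a + 8) := by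
  have hfactor : a ^ 2 - 64 = (a - 8) * (a + 8) := by ring
  have hdiff : (a + 8) - (a - 8) = 2 ^ 4 := by ring
  refine isUnit_or_isUnit_of_isMaximal_pow_le_span_mul h𝔭 ?_ (hfactor ▸ ha)
  rw [hdiff]
  exact fun h => hodd (h𝔭.isPrime.mem_of_pow_mem 4 h)

end CommRing

/-- Let `K` be an imaginary quadratic field of class number one, `a ∈ O_K`, `𝔭` a nonzero prime
ideal of `O_K` not dividing `2`, and `r ≥ 1` with `(a² - 64) = 𝔭^r`.  Then `a - 8` or `a + 8` is
a unit of `O_K`. -/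
theorem factor_of_prime_power_is_unit
    (K : Type*) [Field K] [NumberField K]
    [Algebra.IsQuadraticExtension ℚ K] [NumberField.IsTotallyComplex K]
    (hcl : NumberField.classNumber K = 1)
    (a : 𝓞 K) (𝔭 : Ideal (𝓞 K)) (h𝔭 : 𝔭.IsPrime) (h𝔭0 : 𝔭 ≠ ⊥) (hodd : (2 : 𝓞 K) ∉ 𝔭)
    (r : ℕ) (hr : 1 ≤ r)
    (ha : Ideal.span ({a ^ 2 - 64} : Set (𝓞 K)) = 𝔭 ^ r) :
    IsUnit (a - 8) ∨ IsUnit (a + 8) :=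
  factor_of_prime_power_is_unit_general (h𝔭.isMaximal h𝔭0) hodd ha.ge
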